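/- arXiv:1111.0986 — 2 statements merged into one kernel-verified Lean document; each statement's English description precedes it below -/
import Mathlib

section
/- For every ℓ ≥ 1, the number of 321-avoiding reverse-alternating (down-up) permutations of length 2ℓ+1 is the Catalan number C_{ℓ+1}. -/
/-- `w` is an alternating (up-down) permutation: `w 0 < w 1 > w 2 < ⋯`. -/
def UpDown {n : ℕ} (w : Equiv.Perm (Fin n)) : Prop :=
  ∀ i : ℕ, ∀ h : i + 1 < n,
    if i % 2 = 0 then w ⟨i, Nat.lt_of_succ_lt h⟩ < w ⟨i + 1, h⟩
    else w ⟨i + 1, h⟩ < w ⟨i, Nat.lt_of_succ_lt h⟩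

/-- `w` is a reverse-alternating (down-up) permutation: `w 0 > w 1 < w 2 > ⋯`. -/
def DownUp {n : ℕ} (w : Equiv.Perm (Fin n)) : Prop :=
  ∀ i : ℕ, ∀ h : i + 1 < n,
    if i % 2 = 0 then w ⟨i + 1, h⟩ < w ⟨i, Nat.lt_of_succ_lt h⟩
    else w ⟨i, Nat.lt_of_succ_lt h⟩ < w ⟨i + 1, h⟩

/-- The set of occurrences of the pattern 321 in `w`. -/
def occ321 {n : ℕ} (w : Equiv.Perm (Fin n)) : Set (Fin n × Fin n × Fin n) :=
  {t | t.1 < t.2.1 ∧ t.2.1 < t.2.2 ∧ w t.2.2 < w t.2.1 ∧ w t.2.1 < w t.1}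

/-- The set of occurrences of the pattern 123 in `w`. -/
def occ123 {n : ℕ} (w : Equiv.Perm (Fin n)) : Set (Fin n × Fin n × Fin n) :=
  {t | t.1 < t.2.1 ∧ t.2.1 < t.2.2 ∧ w t.1 < w t.2.1 ∧ w t.2.1 < w t.2.2}

/-! In a down-up permutation each entry at an odd position (counting from 0) lies below its left
neighbour, so avoiding 321 forces the descent bottoms, together with the last entry, to increase,
and likewise the descent tops. Writing the former in a first row and the latter in a second row
gives a standard Young tableau of shape `(l + 1, l)`; conversely, a union of two increasing
subsequences contains no 321. Two-row tableaux correspond to their lattice words, for which the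
column condition becomes the ballot condition, and appending a final down step to a lattice word
gives a Dyck word of semilength `l + 1`. -/

section BallotWord

open DyckStep

/-- A word in the letters `U` and `D` is a ballot word if none of its prefixes contains more `D`s
than `U`s. Unlike in a `DyckWord`, the total numbers of `U`s and `D`s may differ. -/
def IsBallot (L : List DyckStep) : Prop :=
  ∀ k, (L.take k).count D ≤ (L.take k).count U

theorem IsBallot.concat_D {L : List DyckStep} (hL : IsBallot L) (h : L.count D < L.count U) :
    IsBallot (L ++ [D]) := by
  intro k
  obtain hk | hk := le_or_gt k L.length
  · simpa only [List.take_append_of_le_length hk] using hL k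
  · rw [List.take_of_length_le (by simpa using hk)]
    simpa using h

theorem IsBallot.dropLast {L : List DyckStep} (hL : IsBallot L) : IsBallot L.dropLast := by
  intro k
  simpa only [List.dropLast_eq_take, List.take_take] using hL _

theorem count_U_add_count_D (L : List DyckStep) : L.count U + L.count D = L.length := by
  induction L with
  | nil => rfl
  | cons s L ih => cases s <;> grind

theorem ne_zero_of_semilength_eq_succ {p : DyckWord} {n : ℕ} (hp : p.semilength = n + 1) :
    p ≠ 0 := by
  rintro rfl
  simp at hp

theorem dropLast_concat_D {p : DyckWord} (hp : p ≠ 0) : p.toList.dropLast ++ [D] = p.toList := by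
  have hne : p.toList ≠ [] := DyckWord.toList_ne_nil.2 hp
  simpa only [p.getLast_eq_D hne] using List.dropLast_append_getLast hne

/-- Appending a final `D` identifies the ballot words with one more `U` than `D`s with the nonempty
Dyck words. -/
def ballotEquivDyckWord (n : ℕ) :
    {L : List DyckStep // IsBallot L ∧ L.count U = n + 1 ∧ L.count D = n} ≃
      {p : DyckWord // p.semilength = n + 1} where
  toFun := fun ⟨L, hL, hU, hD⟩ =>
    ⟨⟨L ++ [D], by simp [hU, hD], hL.concat_D (by omega)⟩, by simp [DyckWord.semilength, hU]⟩
  invFun := fun ⟨p, hp⟩ =>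
    have hlast := dropLast_concat_D (ne_zero_of_semilength_eq_succ hp)
    have hU : (p.toList.dropLast ++ [D]).count U = n + 1 := by rwa [hlast]
    have hD : (p.toList.dropLast ++ [D]).count D = n + 1 := by rwa [hlast, ← p.count_U_eq_count_D]
    ⟨p.toList.dropLast, IsBallot.dropLast p.count_D_le_count_U,
      by simpa using hU, by simpa using hD⟩
  left_inv := fun ⟨_, _, _, _⟩ => Subtype.ext List.dropLast_concat
  right_inv := fun ⟨_, hp⟩ =>
    Subtype.ext (DyckWord.ext (dropLast_concat_D (ne_zero_of_semilength_eq_succ hp)))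

end BallotWord

section Counting

open Finset

theorem forall_castLE_le_iff_card_lt_le_card_lt {α : Type*} [LinearOrder α] {m n : ℕ} (h : n ≤ m)
    {f : Fin m → α} {g : Fin n → α} (hf : Monotone f) (hg : Monotone g) :
    (∀ i, f (i.castLE h) ≤ g i) ↔ ∀ a, #{i | g i < a} ≤ #{i | f i < a} := by
  constructor
  · intro hfg a
    refine card_le_card_of_injOn (Fin.castLE h) (fun i hi => ?_) (Fin.castLE_injective h).injOn
    simp only [coe_filter, mem_univ, true_and, Set.mem_ofPred_eq] at hi ⊢
    exact (hfg i).trans_lt hi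
  · intro hcard i
    by_contra! hlt
    have hg_card : #(Iic i) ≤ #{j | g j < f (i.castLE h)} :=
      card_le_card fun j hj => by simpa using (hg (mem_Iic.1 hj)).trans_lt hlt
    have hf_card : #{j | f j < f (i.castLE h)} ≤ #(Iio (i.castLE h)) :=
      card_le_card fun j hj => mem_Iio.2 (hf.reflect_lt (mem_filter.1 hj).2)
    have hle : #(Iic i) ≤ #(Iio (i.castLE h)) := hg_card.trans ((hcard _).trans hf_card)
    simp at hle

theorem count_take_ofFn {α : Type*} [DecidableEq α] {n : ℕ} (f : Fin n → α) (a : α) (k : ℕ) :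
    ((List.ofFn f).take k).count a = #{i | i.val < k ∧ f i = a} := by
  have hmem (i : Fin n) : i ∈ (List.finRange n).take k ↔ i.val < k := by
    simp [List.mem_take_iff_getElem, Fin.ext_iff]
  have hnodup := (List.nodup_finRange n).sublist (List.take_sublist k _)
  rw [List.ofFn_eq_map, ← List.map_take, List.count, List.countP_map, List.countP_eq_length_filter,
    ← List.toFinset_card_of_nodup (hnodup.filter _)]
  congr 1
  ext i
  simp [hmem]

theorem count_take_ofFn_of_range {α ι : Type*} [DecidableEq α] [Fintype ι] {n : ℕ} {f : Fin n → α}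
    {a : α} {g : ι → Fin n} (hg : Function.Injective g) (hfg : ∀ v, f v = a ↔ v ∈ Set.range g)
    (k : ℕ) : ((List.ofFn f).take k).count a = #{i | (g i).val < k} := by
  rw [count_take_ofFn, ← card_map ⟨g, hg⟩]
  congr 1
  ext v
  simp only [mem_filter_univ, hfg, Set.mem_range, mem_map, Function.Embedding.coeFn_mk]
  grind

end Counting

section Tableau

open Finset DyckStep

variable {α : Type*} {m n N : ℕ}

/-- A filling of two rows of `m` and `n` cells by the elements of `α` has increasing rows. Cells in
the first row are indexed by `Sum.inl`, those in the second row by `Sum.inr`. -/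
structure IsRowIncreasing [Preorder α] (T : Fin m ⊕ Fin n ≃ α) : Prop where
  first : StrictMono (T ∘ Sum.inl)
  second : StrictMono (T ∘ Sum.inr)

/-- `T` is a standard Young tableau of the two-row shape `(m, n)`. -/
structure IsStandard [Preorder α] (h : n ≤ m) (T : Fin m ⊕ Fin n ≃ α) : Prop
    extends IsRowIncreasing T where
  column : ∀ i, T (Sum.inl (i.castLE h)) < T (Sum.inr i)

/-- The step recording the row of a cell of a two-row tableau: `U` for the first row, `D` for the
second. -/
def rowStep : Fin m ⊕ Fin n → DyckStep :=
  Sum.elim (fun _ => U) (fun _ => D)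

/-- The lattice word of a two-row tableau: its `v`-th letter records the row that contains `v`. -/
def latticeWord (T : Fin m ⊕ Fin n ≃ Fin N) : List DyckStep :=
  List.ofFn (rowStep ∘ T.symm)

theorem rowStep_symm_eq_U_iff (T : Fin m ⊕ Fin n ≃ α) (v : α) :
    rowStep (T.symm v) = U ↔ v ∈ Set.range (T ∘ Sum.inl) := by
  obtain ⟨i | j, rfl⟩ := T.surjective v <;> simp [rowStep]

theorem rowStep_symm_eq_D_iff (T : Fin m ⊕ Fin n ≃ α) (v : α) :
    rowStep (T.symm v) = D ↔ v ∈ Set.range (T ∘ Sum.inr) := by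
  obtain ⟨i | j, rfl⟩ := T.surjective v <;> simp [rowStep]

theorem count_U_take_latticeWord (T : Fin m ⊕ Fin n ≃ Fin N) (k : ℕ) :
    ((latticeWord T).take k).count U = #{i | (T (Sum.inl i)).val < k} :=
  count_take_ofFn_of_range (T.injective.comp Sum.inl_injective) (rowStep_symm_eq_U_iff T) k

theorem count_D_take_latticeWord (T : Fin m ⊕ Fin n ≃ Fin N) (k : ℕ) :
    ((latticeWord T).take k).count D = #{i | (T (Sum.inr i)).val < k} :=
  count_take_ofFn_of_range (T.injective.comp Sum.inr_injective) (rowStep_symm_eq_D_iff T) k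

theorem count_U_latticeWord (T : Fin m ⊕ Fin n ≃ Fin N) : (latticeWord T).count U = m := by
  simpa [latticeWord, List.take_of_length_le] using count_U_take_latticeWord T N

theorem count_D_latticeWord (T : Fin m ⊕ Fin n ≃ Fin N) : (latticeWord T).count D = n := by
  simpa [latticeWord, List.take_of_length_le] using count_D_take_latticeWord T N

theorem IsRowIncreasing.isStandard_iff_isBallot_latticeWord {T : Fin m ⊕ Fin n ≃ Fin N}
    (hT : IsRowIncreasing T) (h : n ≤ m) : IsStandard h T ↔ IsBallot (latticeWord T) := by
  have hne (i : Fin n) : T (Sum.inl (i.castLE h)) ≠ T (Sum.inr i) := by simp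
  calc IsStandard h T
    _ ↔ ∀ i, (T (Sum.inl (i.castLE h))).val ≤ (T (Sum.inr i)).val :=
      ⟨fun hT' i => (hT'.column i).le, fun hcol => ⟨hT, fun i => lt_of_le_of_ne (hcol i) (hne i)⟩⟩
    _ ↔ IsBallot (latticeWord T) := by
      simp only [IsBallot, count_U_take_latticeWord, count_D_take_latticeWord]
      exact forall_castLE_le_iff_card_lt_le_card_lt h
        (Fin.val_strictMono.comp hT.first).monotone (Fin.val_strictMono.comp hT.second).monotone

theorem latticeWord_injOn :
    Set.InjOn latticeWord {T : Fin m ⊕ Fin n ≃ Fin N | IsRowIncreasing T} := by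
  intro T hT T' hT' hword
  have hstep (v : Fin N) : rowStep (T.symm v) = rowStep (T'.symm v) :=
    congrFun (List.ofFn_injective hword) v
  have hfirst : T ∘ Sum.inl = T' ∘ Sum.inl := (hT.first.range_inj hT'.first).1 <| by
    ext v
    rw [← rowStep_symm_eq_U_iff, hstep, rowStep_symm_eq_U_iff]
  have hsecond : T ∘ Sum.inr = T' ∘ Sum.inr := (hT.second.range_inj hT'.second).1 <| by
    ext v
    rw [← rowStep_symm_eq_D_iff, hstep, rowStep_symm_eq_D_iff]
  exact Equiv.ext (Sum.rec (congrFun hfirst) (congrFun hsecond))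

theorem isRowIncreasing_finSumEquivOfFinset [Fintype α] [LinearOrder α] {s : Finset α}
    (hm : #s = m) (hn : #sᶜ = n) : IsRowIncreasing (finSumEquivOfFinset hm hn) where
  first i j hij := by simpa using hij
  second i j hij := by simpa using hij

theorem exists_isRowIncreasing_comp_eq_rowStep [Fintype α] [LinearOrder α] {c : α → DyckStep}
    (hU : #{v | c v = U} = m) (hD : #{v | c v = D} = n) :
    ∃ T : Fin m ⊕ Fin n ≃ α, IsRowIncreasing T ∧ c ∘ T = rowStep := by
  set s : Finset α := {v | c v = U} with hs
  have hcompl : sᶜ = ({v | c v = D} : Finset α) := by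
    ext v
    cases hv : c v <;> simp [hs, hv]
  have hn : #sᶜ = n := by rw [hcompl, hD]
  refine ⟨finSumEquivOfFinset hU hn, isRowIncreasing_finSumEquivOfFinset hU hn, ?_⟩
  ext (i | j)
  · have hmem : s.orderEmbOfFin hU i ∈ s := orderEmbOfFin_mem s hU i
    rw [Function.comp_apply, finSumEquivOfFinset_inl]
    exact (mem_filter.1 hmem).2
  · have hmem : sᶜ.orderEmbOfFin hn j ∈ sᶜ := orderEmbOfFin_mem sᶜ hn j
    rw [Function.comp_apply, finSumEquivOfFinset_inr]
    exact (mem_filter.1 (hcompl.subset hmem)).2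

theorem exists_isRowIncreasing_latticeWord_eq (hN : m + n = N) {L : List DyckStep}
    (hU : L.count U = m) (hD : L.count D = n) :
    ∃ T : Fin m ⊕ Fin n ≃ Fin N, IsRowIncreasing T ∧ latticeWord T = L := by
  obtain rfl : L.length = N := by rw [← count_U_add_count_D, hU, hD, hN]
  have hcount (s : DyckStep) : L.count s = #{v | L.get v = s} := by
    simpa using count_take_ofFn L.get s L.length
  obtain ⟨T, hT, hcT⟩ := exists_isRowIncreasing_comp_eq_rowStep (c := L.get)
    ((hcount U).symm.trans hU) ((hcount D).symm.trans hD)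
  refine ⟨T, hT, ?_⟩
  rw [latticeWord, ← hcT, Function.comp_assoc, T.self_comp_symm, Function.comp_id, List.ofFn_get]

theorem card_isStandard_eq_card_isBallot (h : n ≤ m) (hN : m + n = N) :
    Nat.card {T : Fin m ⊕ Fin n ≃ Fin N // IsStandard h T} =
      Nat.card {L : List DyckStep // IsBallot L ∧ L.count U = m ∧ L.count D = n} := by
  refine Nat.card_eq_of_bijective (fun ⟨T, hT⟩ => ⟨latticeWord T,
      (hT.toIsRowIncreasing.isStandard_iff_isBallot_latticeWord h).1 hT,
      count_U_latticeWord T, count_D_latticeWord T⟩) ⟨?_, ?_⟩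
  · rintro ⟨T, hT⟩ ⟨T', hT'⟩ hword
    exact Subtype.ext <| latticeWord_injOn hT.toIsRowIncreasing hT'.toIsRowIncreasing
      (congrArg Subtype.val hword)
  · rintro ⟨L, hL, hU, hD⟩
    obtain ⟨T, hT, rfl⟩ := exists_isRowIncreasing_latticeWord_eq hN hU hD
    exact ⟨⟨T, (hT.isStandard_iff_isBallot_latticeWord h).2 hL⟩, rfl⟩

end Tableau

section DownUp

theorem occ321_eq_empty_iff {n : ℕ} {w : Equiv.Perm (Fin n)} :
    occ321 w = ∅ ↔ ∀ i j k, i < j → j < k → w j < w i → w j < w k := by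
  simp only [Set.eq_empty_iff_forall_notMem, occ321, Prod.forall, Set.mem_ofPred_eq, not_and]
  refine forall₅_congr fun i j k _ hjk => ⟨fun h hji => ?_, fun h hkj hji => (h hji).asymm hkj⟩
  exact lt_of_le_of_ne (not_lt.1 fun hkj => h hkj hji) (w.injective.ne hjk.ne)

theorem occ321_eq_empty_of_strictMonoOn {n : ℕ} {w : Equiv.Perm (Fin n)} {s : Set (Fin n)}
    (hs : StrictMonoOn w s) (hsc : StrictMonoOn w sᶜ) : occ321 w = ∅ := by
  rw [occ321_eq_empty_iff]
  intro i j k hij hjk hji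
  by_cases hj : j ∈ s
  · have hi : i ∉ s := fun hi => (hs hi hj hij).asymm hji
    by_cases hk : k ∈ s
    · exact hs hj hk hjk
    · exact hji.trans (hsc hi hk (hij.trans hjk))
  · have hi : i ∈ s := by_contra fun hi => (hsc hi hj hij).asymm hji
    by_cases hk : k ∈ s
    · exact hji.trans (hs hi hk (hij.trans hjk))
    · exact hsc hj hk hjk

theorem IsRowIncreasing.occ321_eq_empty {m n N : ℕ} {e : Fin m ⊕ Fin n ≃ Fin N}
    {w : Equiv.Perm (Fin N)} (he : IsRowIncreasing e) (hw : IsRowIncreasing (e.trans w)) :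
    occ321 w = ∅ := by
  have hcompl : (Set.range (e ∘ Sum.inl))ᶜ = Set.range (e ∘ Sum.inr) := by
    ext v
    obtain ⟨i | j, rfl⟩ := e.surjective v <;> simp
  refine occ321_eq_empty_of_strictMonoOn (s := Set.range (e ∘ Sum.inl)) ?_ (hcompl ▸ ?_)
  · rintro _ ⟨i, rfl⟩ _ ⟨j, rfl⟩ hij
    exact hw.first (he.first.lt_iff_lt.1 hij)
  · rintro _ ⟨i, rfl⟩ _ ⟨j, rfl⟩ hij
    exact hw.second (he.second.lt_iff_lt.1 hij)

variable {l : ℕ} {w : Equiv.Perm (Fin (2 * l + 1))}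

theorem downUp_iff : DownUp w ↔ ∀ i : Fin l,
    w ⟨2 * i + 1, by omega⟩ < w ⟨2 * i, by omega⟩ ∧
      w ⟨2 * i + 1, by omega⟩ < w ⟨2 * i + 2, by omega⟩ := by
  refine ⟨fun h i => ⟨?_, ?_⟩, fun h i hi => ?_⟩
  · simpa using h (2 * i) (by omega)
  · simpa [Nat.add_mod] using h (2 * i + 1) (by omega)
  · split_ifs with heven
    · obtain ⟨a, rfl⟩ : ∃ a, i = 2 * a := ⟨i / 2, by omega⟩
      exact (h ⟨a, by omega⟩).1
    · obtain ⟨a, rfl⟩ : ∃ a, i = 2 * a + 1 := ⟨i / 2, by omega⟩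
      exact (h ⟨a, by omega⟩).2

/-- The placement of the positions of a down-up sequence of length `2 * l + 1` in the cells of a
two-row shape: the descent bottoms `1, 3, …, 2 * l - 1` and the last position `2 * l` form the first
row, the descent tops `0, 2, …, 2 * l - 2` form the second row. -/
def zigzagEquiv (l : ℕ) : Fin (l + 1) ⊕ Fin l ≃ Fin (2 * l + 1) where
  toFun := Sum.elim (fun i => ⟨min (2 * i + 1) (2 * l), by omega⟩) (fun i => ⟨2 * i, by omega⟩)
  invFun v :=
    if h : v.val % 2 = 0 ∧ v.val < 2 * l then Sum.inr ⟨v / 2, by omega⟩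
    else Sum.inl ⟨v / 2, by omega⟩
  left_inv := by
    rintro (i | i) <;> simp only [Sum.elim_inl, Sum.elim_inr] <;> split_ifs <;> grind
  right_inv v := by
    dsimp only
    split_ifs <;> simp only [Sum.elim_inl, Sum.elim_inr, Fin.ext_iff] <;> omega

theorem zigzagEquiv_inl_castLE (i : Fin l) :
    zigzagEquiv l (Sum.inl (i.castLE l.le_succ)) = ⟨2 * i + 1, by omega⟩ := by
  simp only [zigzagEquiv, Equiv.coe_fn_mk, Sum.elim_inl, Fin.ext_iff, Fin.val_castLE]
  omega

theorem zigzagEquiv_inl_last : zigzagEquiv l (Sum.inl (Fin.last l)) = Fin.last (2 * l) := by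
  simp [zigzagEquiv, Fin.ext_iff]

theorem zigzagEquiv_inr (i : Fin l) : zigzagEquiv l (Sum.inr i) = ⟨2 * i, by omega⟩ :=
  rfl

theorem isRowIncreasing_zigzagEquiv : IsRowIncreasing (zigzagEquiv l) where
  first i j hij := by
    simp only [zigzagEquiv, Equiv.coe_fn_mk, Function.comp_apply, Sum.elim_inl, Fin.mk_lt_mk]
    omega
  second i j hij := by
    simp only [zigzagEquiv, Equiv.coe_fn_mk, Function.comp_apply, Sum.elim_inr, Fin.mk_lt_mk]
    omega

theorem downUp_of_isStandard (hw : IsStandard l.le_succ ((zigzagEquiv l).trans w)) :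
    DownUp w := by
  refine downUp_iff.2 fun i => ?_
  have hdesc : w ⟨2 * i + 1, by omega⟩ < w ⟨2 * i, by omega⟩ := by
    simpa [zigzagEquiv_inl_castLE, zigzagEquiv_inr] using hw.column i
  refine ⟨hdesc, ?_⟩
  obtain hi | hi : i.val + 1 < l ∨ i.val + 1 = l := by omega
  · exact hdesc.trans (hw.second (a := i) (b := ⟨i + 1, hi⟩) (Nat.lt_succ_self i))
  · have hlast : (⟨2 * i + 2, by omega⟩ : Fin (2 * l + 1)) = Fin.last (2 * l) := by
      simp only [Fin.ext_iff, Fin.val_last]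
      omega
    simpa [zigzagEquiv_inl_castLE, zigzagEquiv_inl_last, hlast] using
      hw.first (a := i.castLE l.le_succ) (b := Fin.last l) i.2

theorem DownUp.isStandard (hw : DownUp w) (h321 : occ321 w = ∅) :
    IsStandard l.le_succ ((zigzagEquiv l).trans w) := by
  have hcol (i : Fin l) :
      w (zigzagEquiv l (Sum.inl (i.castLE l.le_succ))) < w (zigzagEquiv l (Sum.inr i)) := by
    simpa only [zigzagEquiv_inl_castLE, zigzagEquiv_inr] using (downUp_iff.1 hw i).1
  have hpos (i : Fin l) :
      zigzagEquiv l (Sum.inr i) < zigzagEquiv l (Sum.inl (i.castLE l.le_succ)) := by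
    simp [zigzagEquiv_inl_castLE, zigzagEquiv_inr]
  have hzig := isRowIncreasing_zigzagEquiv (l := l)
  rw [occ321_eq_empty_iff] at h321
  refine ⟨⟨fun i j hij => ?_, fun i j hij => ?_⟩, hcol⟩
  · obtain ⟨i, rfl⟩ : ∃ i' : Fin l, i'.castLE l.le_succ = i := ⟨⟨i, by omega⟩, rfl⟩
    exact h321 _ _ _ (hpos i) (hzig.first hij) (hcol i)
  · by_contra! hle
    have hlt : w (zigzagEquiv l (Sum.inr j)) < w (zigzagEquiv l (Sum.inr i)) :=
      lt_of_le_of_ne hle (w.injective.ne (hzig.second hij).ne')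
    exact (h321 _ _ _ (hzig.second hij) (hpos j) hlt).asymm (hcol j)

/-- Reading a 321-avoiding down-up permutation along `zigzagEquiv` identifies these permutations
with the standard Young tableaux of shape `(l + 1, l)`. -/
def avoiderEquivTableau (l : ℕ) :
    {w : Equiv.Perm (Fin (2 * l + 1)) // DownUp w ∧ occ321 w = ∅} ≃
      {T : Fin (l + 1) ⊕ Fin l ≃ Fin (2 * l + 1) // IsStandard l.le_succ T} :=
  ((zigzagEquiv l).symm.equivCongr (Equiv.refl _)).subtypeEquiv fun _ =>
    ⟨fun h => h.1.isStandard h.2,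
      fun h => ⟨downUp_of_isStandard h,
        isRowIncreasing_zigzagEquiv.occ321_eq_empty h.toIsRowIncreasing⟩⟩

end DownUp

theorem stmt6 (l : ℕ) (hl : 1 ≤ l) :
    Nat.card {w : Equiv.Perm (Fin (2 * l + 1)) // DownUp w ∧ occ321 w = ∅} = catalan (l + 1) := by
  rw [Nat.card_congr (avoiderEquivTableau l),
    card_isStandard_eq_card_isBallot l.le_succ (by omega),
    Nat.card_congr (ballotEquivDyckWord l), Nat.card_eq_fintype_card,
    DyckWord.card_dyckWord_semilength_eq_catalan]
end

section
/- For every m ≥ 2, the number of alternating (up-down) permutations of length 2m containing the pattern 321 exactly once is 4(m-2)(2m+3)! / ((m+1)!(m+4)!). -/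
/-!
In an alternating permutation `w` with a unique occurrence of 321, at positions `p < q < r`, the
middle letter is a fixed point. Suppose first that `q` is even. Then `r = q + 2`, and exchanging
the letters at `q` and `r` destroys the occurrence, which makes a bijection onto the alternating
permutations `v` avoiding 321 with `v r = q`. Avoiding 321 means that `v` splits into two
increasing rows, one for the peaks and one for the valleys up to the two extreme positions, so that
`v` is a standard filling of a skew shape, that is a ballot word from height 1 to height 1. For
`q = 2 * j` the condition `v r = q` says that the word is back at height 1 after `2 * j` steps and
goes up next. Splitting it there, there are `C (j + 1) * (C (m - j + 1) - C (m - j))` such words,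
where `C` denotes the Catalan numbers. Their sum over `1 ≤ j ≤ m - 2` is `C (m + 3) - 3 * C (m + 2)`
by Segner's recurrence. The reverse-complement exchanges the cases of even and odd `q`, so the
total is twice this number.
-/

open Equiv (swap Perm)

section BallotWords

/-- A sequence of up and down steps is a ballot word from height `a` to height `b` if the lattice
path that it describes, started at height `a`, never goes below `0` and ends at height `b`. -/
structure IsBallot_s13 (a b : ℕ) (l : List DyckStep) : Prop where
  count_take_le (i : ℕ) : (l.take i).count .D ≤ a + (l.take i).count .U
  count_add : l.count .D + b = a + l.count .U

/-- The ballot words of length `n` from height `a` to height `b`. -/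
def ballotWords (n a b : ℕ) : Set (List DyckStep) := {l | l.length = n ∧ IsBallot_s13 a b l}

lemma isBallot_append {a b c : ℕ} {l₁ l₂ : List DyckStep}
    (h : l₁.count .D + c = a + l₁.count .U) :
    IsBallot_s13 a b (l₁ ++ l₂) ↔ IsBallot_s13 a c l₁ ∧ IsBallot_s13 c b l₂ := by
  constructor
  · rintro ⟨hle, hadd⟩
    refine ⟨⟨fun i ↦ ?_, h⟩, fun i ↦ ?_, ?_⟩
    · simpa [List.take_append_of_le_length, List.take_eq_take_min (i := i)] using
        hle (min i l₁.length)
    · have := hle (l₁.length + i)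
      rw [List.take_length_add_append, List.count_append, List.count_append] at this
      lia
    · rw [List.count_append, List.count_append] at hadd
      lia
  · rintro ⟨h₁, h₂⟩
    refine ⟨fun i ↦ ?_, ?_⟩
    · have h₁i := h₁.count_take_le i
      have h₂i := h₂.count_take_le (i - l₁.length)
      rw [List.take_append, List.count_append, List.count_append]
      rcases le_total i l₁.length with hi | hi
      · simpa [hi] using h₁i
      · rw [List.take_of_length_le hi]
        lia
    · have := h₂.count_add
      rw [List.count_append, List.count_append]
      lia

lemma isBallot_singleton_U (a : ℕ) : IsBallot_s13 a (a + 1) [.U] :=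
  ⟨fun i ↦ by cases i <;> simp, by simp⟩

lemma isBallot_singleton_D {a b : ℕ} : IsBallot_s13 a b [.D] ↔ a = b + 1 := by
  constructor
  · rintro ⟨-, h⟩
    simpa [add_comm, eq_comm] using h
  · rintro rfl
    exact ⟨fun i ↦ by cases i <;> simp, by simp [add_comm]⟩

lemma isBallot_cons_U {a b : ℕ} {l : List DyckStep} :
    IsBallot_s13 a b (.U :: l) ↔ IsBallot_s13 (a + 1) b l := by
  rw [← List.singleton_append, isBallot_append (c := a + 1) (by simp),
    and_iff_right (isBallot_singleton_U a)]

lemma isBallot_succ_cons_D {a b : ℕ} {l : List DyckStep} :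
    IsBallot_s13 (a + 1) b (.D :: l) ↔ IsBallot_s13 a b l := by
  rw [← List.singleton_append, isBallot_append (c := a) (by simp [add_comm]),
    and_iff_right (isBallot_singleton_D.2 rfl)]

lemma not_isBallot_zero_cons_D {b : ℕ} {l : List DyckStep} : ¬ IsBallot_s13 0 b (.D :: l) :=
  fun h ↦ by simpa using h.count_take_le 1

lemma finite_ballotWords (n a b : ℕ) : (ballotWords n a b).Finite := by
  have : Finite DyckStep := .of_injective (· = .U) fun s t ↦ by cases s <;> cases t <;> simp
  exact (List.finite_length_eq DyckStep n).subset fun l hl ↦ hl.1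

lemma ballotWords_succ_zero (n b : ℕ) :
    ballotWords (n + 1) 0 b = (DyckStep.U :: ·) '' ballotWords n 1 b := by
  ext (_ | ⟨_ | _, l⟩) <;>
    simp [ballotWords, isBallot_cons_U, not_isBallot_zero_cons_D]

lemma ballotWords_succ_succ (n a b : ℕ) :
    ballotWords (n + 1) (a + 1) b =
      (DyckStep.U :: ·) '' ballotWords n (a + 2) b ∪ (DyckStep.D :: ·) '' ballotWords n a b := by
  ext (_ | ⟨_ | _, l⟩) <;>
    simp [ballotWords, isBallot_cons_U, isBallot_succ_cons_D]

lemma ncard_ballotWords_succ_zero (n b : ℕ) :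
    (ballotWords (n + 1) 0 b).ncard = (ballotWords n 1 b).ncard := by
  rw [ballotWords_succ_zero, Set.ncard_image_of_injective _ List.cons_injective]

lemma ncard_ballotWords_succ_succ (n a b : ℕ) :
    (ballotWords (n + 1) (a + 1) b).ncard =
      (ballotWords n (a + 2) b).ncard + (ballotWords n a b).ncard := by
  rw [ballotWords_succ_succ, Set.ncard_union_eq _ ((finite_ballotWords ..).image _)
      ((finite_ballotWords ..).image _), Set.ncard_image_of_injective _ List.cons_injective,
    Set.ncard_image_of_injective _ List.cons_injective]
  rw [Set.disjoint_left]
  rintro _ ⟨_, -, rfl⟩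
  simp

lemma isBallot_concat_D {a b : ℕ} {l : List DyckStep} :
    IsBallot_s13 a b (l ++ [.D]) ↔ IsBallot_s13 a (b + 1) l := by
  constructor
  · intro h
    have hadd : l.count .D + (b + 1) = a + l.count .U := by
      simpa [add_assoc, add_comm 1] using h.count_add
    exact ((isBallot_append hadd).1 h).1
  · exact fun h ↦ (isBallot_append h.count_add).2 ⟨h, isBallot_singleton_D.2 rfl⟩

lemma not_isBallot_zero_concat_U {a : ℕ} {l : List DyckStep} : ¬ IsBallot_s13 a 0 (l ++ [.U]) := by
  intro h
  have hle : l.count .D ≤ a + l.count .U := by simpa using h.count_take_le l.length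
  have hadd : l.count .D = a + (l.count .U + 1) := by simpa using h.count_add
  lia

lemma ballotWords_succ_to_zero (n a : ℕ) :
    ballotWords (n + 1) a 0 = (· ++ [DyckStep.D]) '' ballotWords n a 1 := by
  ext l
  rcases List.eq_nil_or_concat l with rfl | ⟨l, _ | _, rfl⟩ <;>
    simp [ballotWords, isBallot_concat_D, not_isBallot_zero_concat_U]

lemma ncard_ballotWords_succ_to_zero (n a : ℕ) :
    (ballotWords (n + 1) a 0).ncard = (ballotWords n a 1).ncard := by
  rw [ballotWords_succ_to_zero, Set.ncard_image_of_injective _ (List.append_left_injective _)]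

lemma ncard_ballotWords_zero_zero (n : ℕ) : (ballotWords (2 * n) 0 0).ncard = catalan n := by
  have h : ballotWords (2 * n) 0 0 = DyckWord.toList '' {p | p.semilength = n} := by
    ext l
    constructor
    · rintro ⟨hl, hle, hadd⟩
      let p : DyckWord := ⟨l, by simpa using hadd.symm, by simpa using hle⟩
      have hp : 2 * p.semilength = 2 * n := p.two_mul_semilength_eq_length.trans hl
      exact ⟨p, Nat.eq_of_mul_eq_mul_left two_pos hp, rfl⟩
    · rintro ⟨p, rfl, rfl⟩
      exact ⟨p.two_mul_semilength_eq_length.symm, by simpa using p.count_D_le_count_U,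
        by simpa using p.count_U_eq_count_D.symm⟩
  rw [h, Set.ncard_image_of_injective _ fun p q ↦ DyckWord.ext,
    ← DyckWord.card_dyckWord_semilength_eq_catalan, ← Nat.card_eq_fintype_card]
  rfl

lemma ncard_ballotWords_one_one (n : ℕ) : (ballotWords (2 * n) 1 1).ncard = catalan (n + 1) := by
  rw [← ncard_ballotWords_succ_to_zero, ← ncard_ballotWords_succ_zero,
    ← ncard_ballotWords_zero_zero]
  rfl

lemma ncard_ballotWords_two_one_add (n : ℕ) :
    (ballotWords (2 * n + 1) 2 1).ncard + catalan (n + 1) = catalan (n + 2) := by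
  rw [← ncard_ballotWords_succ_to_zero, ← ncard_ballotWords_zero_zero,
    ← ncard_ballotWords_zero_zero, show 2 * (n + 2) = 2 * (n + 1) + 1 + 1 by ring,
    ncard_ballotWords_succ_zero, ncard_ballotWords_succ_succ (2 * (n + 1)) 0]
  rfl

lemma count_D_add_count_U (l : List DyckStep) : l.count .D + l.count .U = l.length := by
  induction l with
  | nil => rfl
  | cons s l ih => cases s <;> grind

/-- The ballot words from height `1` to height `1` of length `2 * n` that visit height `1` after
`2 * j` steps and rise from there. -/
def markedBallotWords (n j : ℕ) : Set (List DyckStep) :=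
  {l ∈ ballotWords (2 * n) 1 1 | l[2 * j]? = some .U ∧ (l.take (2 * j)).count .U = j}

lemma injOn_append_cons {α : Type*} (n : ℕ) (a : α) :
    Set.InjOn (fun p : List α × List α ↦ p.1 ++ a :: p.2) {p | p.1.length = n} := by
  rintro ⟨p, q⟩ hp ⟨p', q'⟩ hp' h
  simpa using List.append_inj h (hp.trans hp'.symm)

lemma markedBallotWords_eq_image (j k : ℕ) :
    markedBallotWords (j + k + 1) j =
      (fun p : List DyckStep × List DyckStep ↦ p.1 ++ .U :: p.2) ''
        ballotWords (2 * j) 1 1 ×ˢ ballotWords (2 * k + 1) 2 1 := by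
  ext l
  constructor
  · rintro ⟨⟨hl, hb⟩, hU, hc⟩
    obtain ⟨h, hU⟩ := List.getElem?_eq_some_iff.1 hU
    have hsplit : l = l.take (2 * j) ++ .U :: l.drop (2 * j + 1) := by
      rw [← hU, ← List.drop_eq_getElem_cons h, List.take_append_drop]
    have hlen : (l.take (2 * j)).length = 2 * j := List.length_take_of_le h.le
    have hD := count_D_add_count_U (l.take (2 * j))
    rw [hsplit, isBallot_append (c := 1) (by lia), isBallot_cons_U] at hb
    exact ⟨(l.take (2 * j), l.drop (2 * j + 1)),
      ⟨⟨hlen, hb.1⟩, by rw [List.length_drop]; lia, hb.2⟩, hsplit.symm⟩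
  · rintro ⟨⟨p, q⟩, ⟨⟨hp : p.length = _, hpb⟩, (hq : q.length = _), hqb⟩, rfl⟩
    have hadd := hpb.count_add
    have hD := count_D_add_count_U p
    refine ⟨⟨?_, (isBallot_append hadd).2 ⟨hpb, isBallot_cons_U.2 hqb⟩⟩, ?_, ?_⟩
    · rw [List.length_append, List.length_cons]
      lia
    · simp [← hp]
    · rw [← hp, List.take_left]
      lia

lemma ncard_markedBallotWords_add (j k : ℕ) :
    (markedBallotWords (j + k + 1) j).ncard + catalan (j + 1) * catalan (k + 1) =
      catalan (j + 1) * catalan (k + 2) := by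
  rw [markedBallotWords_eq_image,
    ((injOn_append_cons (2 * j) DyckStep.U).mono fun p hp ↦ hp.1.1).ncard_image, Set.ncard_prod,
    ncard_ballotWords_one_one, ← mul_add, ncard_ballotWords_two_one_add]

end BallotWords

section RowWord

variable {ι : Type*} {k n : ℕ}

/-- The word of length `n` whose letter at `v` is the row in which the filling `σ` of the
`ι`-indexed rows of length `k` puts the entry `v`. -/
def rowWord (σ : ι × Fin k ≃ Fin n) : List ι := List.ofFn fun v ↦ (σ.symm v).1

/-- A filling whose rows are increasing. -/
def RowStrict (σ : ι × Fin k ≃ Fin n) : Prop := ∀ s, StrictMono fun i ↦ σ (s, i)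

lemma length_rowWord (σ : ι × Fin k ≃ Fin n) : (rowWord σ).length = n := List.length_ofFn

lemma getElem?_rowWord (σ : ι × Fin k ≃ Fin n) (v : Fin n) :
    (rowWord σ)[(v : ℕ)]? = some (σ.symm v).1 := by
  simp [rowWord]

lemma count_take_ofFn_s13 [DecidableEq ι] (f : Fin n → ι) (v : ℕ) (s : ι) :
    ((List.ofFn f).take v).count s = Finset.card {x : Fin n | x < v ∧ f x = s} := by
  induction n generalizing v with
  | zero => simp
  | succ n ih =>
    rcases v with _ | v
    · simp
    · rw [List.ofFn_succ, List.take_succ_cons, List.count_cons, ih, Fin.card_filter_univ_succ]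
      by_cases h : f 0 = s <;> simp [h]

lemma count_take_rowWord [DecidableEq ι] (σ : ι × Fin k ≃ Fin n) (v : ℕ) (s : ι) :
    ((rowWord σ).take v).count s = Finset.card {i : Fin k | σ (s, i) < v} := by
  rw [rowWord, count_take_ofFn_s13]
  refine (Finset.card_bij (fun i _ ↦ σ (s, i)) (by simp) (by simp) ?_).symm
  intro x hx
  obtain ⟨⟨t, i⟩, rfl⟩ := σ.surjective x
  simp only [Finset.mem_filter_univ, Equiv.symm_apply_apply] at hx
  obtain ⟨hlt, rfl⟩ := hx
  exact ⟨i, by simpa using hlt, rfl⟩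

lemma count_rowWord [DecidableEq ι] (σ : ι × Fin k ≃ Fin n) (s : ι) : (rowWord σ).count s = k := by
  have h := count_take_rowWord σ n s
  rw [List.take_of_length_le (length_rowWord σ).le] at h
  simpa using h

lemma RowStrict.count_take [DecidableEq ι] {σ : ι × Fin k ≃ Fin n} (hσ : RowStrict σ) (s : ι)
    (i : Fin k) :
    ((rowWord σ).take (σ (s, i))).count s = i := by
  have h (j) : σ (s, j) < σ (s, i) ↔ j < i := (hσ s).lt_iff_lt
  simp [count_take_rowWord, h, Finset.filter_gt_eq_Iio]

lemma RowStrict.apply_lt_iff [DecidableEq ι] {σ : ι × Fin k ≃ Fin n} (hσ : RowStrict σ) (s : ι)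
    (i : Fin k) (v : ℕ) : σ (s, i) < v ↔ i < ((rowWord σ).take v).count s := by
  rw [count_take_rowWord]
  rcases lt_or_ge (σ (s, i) : ℕ) v with h | h
  · have hsub : Finset.Iic i ⊆ ({j | σ (s, j) < v} : Finset (Fin k)) := fun j hj ↦ by
      have hle : σ (s, j) ≤ σ (s, i) := (hσ s).monotone (Finset.mem_Iic.1 hj)
      simpa using lt_of_le_of_lt (Fin.val_le_of_le hle) h
    have hcard := Finset.card_le_card hsub
    rw [Fin.card_Iic] at hcard
    exact iff_of_true h hcard
  · have hsub : ({j | σ (s, j) < v} : Finset (Fin k)) ⊆ Finset.Iio i := fun j hj ↦ by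
      have hj : σ (s, j) < v := by simpa using hj
      exact Finset.mem_Iio.2 ((hσ s).lt_iff_lt.1 (hj.trans_le h))
    have hcard := Finset.card_le_card hsub
    rw [Fin.card_Iio] at hcard
    exact iff_of_false h.not_gt hcard.not_gt

lemma RowStrict.apply_eq_iff [DecidableEq ι] {σ : ι × Fin k ≃ Fin n} (hσ : RowStrict σ) (s : ι)
    (i : Fin k) (v : Fin n) :
    σ (s, i) = v ↔ (rowWord σ)[(v : ℕ)]? = some s ∧ ((rowWord σ).take v).count s = i := by
  rw [getElem?_rowWord]
  constructor
  · rintro rfl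
    simp [hσ.count_take]
  · rintro ⟨hs, hc⟩
    obtain ⟨⟨t, j⟩, rfl⟩ := σ.surjective v
    obtain rfl : t = s := by simpa using hs
    rw [hσ.count_take, Fin.val_inj] at hc
    rw [hc]

lemma injOn_rowWord : Set.InjOn (rowWord (ι := ι) (k := k) (n := n)) {σ | RowStrict σ} := by
  classical
  intro σ hσ τ hτ h
  ext1 ⟨s, i⟩
  rw [hσ.apply_eq_iff, h]
  exact (hτ.apply_eq_iff s i _).1 rfl

lemma exists_rowStrict [DecidableEq ι] (f : Fin n → ι) (hf : ∀ s, Finset.card {v | f v = s} = k) :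
    ∃ σ : ι × Fin k ≃ Fin n, RowStrict σ ∧ ∀ s i, f (σ (s, i)) = s := by
  let g (p : ι × Fin k) : Fin n := Finset.orderEmbOfFin {v | f v = p.1} (hf p.1) p.2
  have hg (p) : f (g p) = p.1 :=
    (Finset.mem_filter.1 (Finset.orderEmbOfFin_mem _ (hf p.1) p.2)).2
  have hbij : g.Bijective := by
    constructor
    · rintro ⟨s, i⟩ ⟨t, j⟩ h
      obtain rfl : s = t := by simpa [hg] using congrArg f h
      simpa [g] using h
    · intro v
      have hv : v ∈ Set.range (Finset.orderEmbOfFin {w | f w = f v} (hf (f v))) := by simp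
      obtain ⟨i, hi⟩ := hv
      exact ⟨(f v, i), hi⟩
  exact ⟨.ofBijective g hbij, fun s ↦ (Finset.orderEmbOfFin _ (hf s)).strictMono,
    fun s i ↦ hg (s, i)⟩

lemma exists_rowWord_eq [DecidableEq ι] {l : List ι} (hlen : l.length = n)
    (hcount : ∀ s, l.count s = k) :
    ∃ σ : ι × Fin k ≃ Fin n, RowStrict σ ∧ rowWord σ = l := by
  subst hlen
  obtain ⟨σ, hσ, h⟩ := exists_rowStrict l.get fun s ↦ by
    simpa [hcount] using (count_take_ofFn_s13 l.get l.length s).symm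
  refine ⟨σ, hσ, ?_⟩
  conv_rhs => rw [← List.ofFn_get l]
  rw [rowWord, List.ofFn_inj]
  ext1 v
  simpa using (h (σ.symm v).1 (σ.symm v).2).symm

end RowWord

/-- A standard filling of the skew shape with two rows of length `m`, indexed by `.U` and `.D`, in
which the row `.D` is shifted one cell to the left, so that its entry `i + 1` lies below the entry
`i` of the row `.U`. -/
structure IsStandard_s13 {m : ℕ} (σ : DyckStep × Fin m ≃ Fin (2 * m)) : Prop where
  rows : RowStrict σ
  cols (i j : Fin m) : (j : ℕ) = i + 1 → σ (.U, i) < σ (.D, j)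

section IsStandard_s13

variable {m : ℕ} {σ : DyckStep × Fin m ≃ Fin (2 * m)}

lemma RowStrict.isBallot_rowWord_iff (hσ : RowStrict σ) :
    IsBallot_s13 1 1 (rowWord σ) ↔ ∀ i j : Fin m, (j : ℕ) = i + 1 → σ (.U, i) < σ (.D, j) := by
  constructor
  · rintro ⟨hle, -⟩ i j hj
    by_contra! h
    have hlt : σ (.D, j) < σ (.U, i) := h.lt_of_ne (by simp)
    have hD := (hσ.apply_lt_iff .D j _).1 hlt
    have hU := hσ.count_take .U i
    have := hle (σ (.U, i))
    lia
  · refine fun h ↦ ⟨fun v ↦ ?_, by simp [count_rowWord, add_comm]⟩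
    by_contra! hlt
    have hm : ((rowWord σ).take v).count .D ≤ m :=
      ((rowWord σ).take_sublist v).count_le _ |>.trans_eq (count_rowWord σ .D)
    let i : Fin m := ⟨((rowWord σ).take v).count .U, by lia⟩
    let j : Fin m := ⟨i + 1, by simp only [i]; lia⟩
    have hD : σ (.D, j) < v := (hσ.apply_lt_iff .D j v).2 (by simp only [i, j]; lia)
    have hU : σ (.U, i) < v := lt_trans (Fin.lt_def.1 (h i j rfl)) hD
    exact ((hσ.apply_lt_iff .U i v).1 hU).ne rfl

lemma bijOn_rowWord_isStandard :
    Set.BijOn rowWord {σ | IsStandard_s13 (m := m) σ} (ballotWords (2 * m) 1 1) := by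
  refine ⟨fun σ hσ ↦ ⟨length_rowWord σ, hσ.rows.isBallot_rowWord_iff.2 hσ.cols⟩,
    injOn_rowWord.mono fun σ hσ ↦ hσ.rows, fun l ⟨hlen, hl⟩ ↦ ?_⟩
  have hcount (s : DyckStep) : l.count s = m := by
    have hadd := hl.count_add
    have hDU := count_D_add_count_U l
    cases s <;> lia
  obtain ⟨σ, hσ, rfl⟩ := exists_rowWord_eq hlen hcount
  exact ⟨σ, ⟨hσ, hσ.isBallot_rowWord_iff.1 hl⟩, rfl⟩

lemma ncard_isStandard_eq_ncard_markedBallotWords {j : ℕ} (hj : j < m) :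
    {σ : DyckStep × Fin m ≃ Fin (2 * m) | IsStandard_s13 σ ∧ (σ (.U, ⟨j, hj⟩) : ℕ) = 2 * j}.ncard =
      (markedBallotWords m j).ncard := by
  have h (σ : DyckStep × Fin m ≃ Fin (2 * m)) (hσ : IsStandard_s13 σ) :
      (σ (.U, ⟨j, hj⟩) : ℕ) = 2 * j ↔
        (rowWord σ)[2 * j]? = some .U ∧ ((rowWord σ).take (2 * j)).count .U = j := by
    rw [← hσ.rows.apply_eq_iff .U ⟨j, hj⟩ ⟨2 * j, by lia⟩, Fin.ext_iff]
  have himage : rowWord '' {σ | IsStandard_s13 σ ∧ (σ (.U, ⟨j, hj⟩) : ℕ) = 2 * j} =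
      markedBallotWords m j := by
    ext l
    constructor
    · rintro ⟨σ, ⟨hσ, hj⟩, rfl⟩
      exact ⟨bijOn_rowWord_isStandard.mapsTo hσ, (h σ hσ).1 hj⟩
    · rintro ⟨hl, hj⟩
      obtain ⟨σ, hσ, rfl⟩ := bijOn_rowWord_isStandard.surjOn hl
      exact ⟨σ, ⟨hσ, (h σ hσ).2 hj⟩, rfl⟩
  rw [← himage, (bijOn_rowWord_isStandard.injOn.mono fun σ hσ ↦ hσ.1).ncard_image]

end IsStandard_s13

section Pattern321

variable {n : ℕ} {w : Perm (Fin n)} {p q r : Fin n}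

/-- The positions to the left of `q` with larger values. -/
def largerLeft (w : Perm (Fin n)) (q : Fin n) : Finset (Fin n) := {s | s < q ∧ w q < w s}

/-- The positions to the right of `q` with smaller values. -/
def smallerRight (w : Perm (Fin n)) (q : Fin n) : Finset (Fin n) := {s | q < s ∧ w s < w q}

lemma mem_largerLeft {s : Fin n} : s ∈ largerLeft w q ↔ s < q ∧ w q < w s :=
  Finset.mem_filter_univ s

lemma mem_smallerRight {s : Fin n} : s ∈ smallerRight w q ↔ q < s ∧ w s < w q :=
  Finset.mem_filter_univ s

lemma mem_occ321_iff :
    (p, q, r) ∈ occ321 w ↔ p ∈ largerLeft w q ∧ r ∈ smallerRight w q := by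
  simp only [occ321, Set.mem_ofPred_eq, mem_largerLeft, mem_smallerRight]
  tauto

lemma lt_of_occ321_eq_empty (h : occ321 w = ∅) {x y z : Fin n} (hxy : x < y) (hyz : y < z)
    (h₁ : w z < w y) : w x < w y := by
  by_contra! h₂
  have : (x, y, z) ∈ occ321 w := ⟨hxy, hyz, h₁, h₂.lt_of_ne (w.injective.ne hxy.ne')⟩
  simp [h] at this

lemma card_largerLeft_eq_card_smallerRight_iff :
    (largerLeft w q).card = (smallerRight w q).card ↔ w q = q := by
  let S : Finset (Fin n) := {s | w s < w q}
  have hval : S.card = w q := by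
    rw [← Fin.card_Iio (w q), ← Finset.card_map w.toEmbedding]
    congr 1
    ext v
    simp [S]
  have hL : largerLeft w q = Finset.Iio q \ S := by
    ext s
    rw [mem_largerLeft, Finset.mem_sdiff, Finset.mem_Iio, Finset.mem_filter_univ, not_lt,
      and_congr_right_iff]
    exact fun hs ↦ ⟨le_of_lt, fun h ↦ h.lt_of_ne (w.injective.ne hs.ne')⟩
  have hR : smallerRight w q = S \ Finset.Iio q := by
    ext s
    rw [mem_smallerRight, Finset.mem_sdiff, Finset.mem_Iio, Finset.mem_filter_univ, not_lt,
      and_comm, and_congr_right_iff]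
    exact fun hs ↦ ⟨le_of_lt, fun h ↦ h.lt_of_ne fun h' ↦ hs.ne (congrArg w h'.symm)⟩
  rw [hL, hR, Finset.card_sdiff_eq_card_sdiff_iff, hval, Fin.card_Iio, eq_comm, Fin.val_inj]

lemma largerLeft_smallerRight_of_occ321_eq_singleton (h : occ321 w = {(p, q, r)}) :
    largerLeft w q = {p} ∧ smallerRight w q = {r} := by
  have hmem (x z : Fin n) :
      x ∈ largerLeft w q ∧ z ∈ smallerRight w q ↔ x = p ∧ z = r := by
    rw [← mem_occ321_iff, h]
    simp
  obtain ⟨hp, hr⟩ := (hmem p r).2 ⟨rfl, rfl⟩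
  constructor <;> ext x <;> rw [Finset.mem_singleton]
  · exact ⟨fun hx ↦ ((hmem x r).1 ⟨hx, hr⟩).1, fun hx ↦ hx ▸ hp⟩
  · exact ⟨fun hx ↦ ((hmem p x).1 ⟨hp, hx⟩).2, fun hx ↦ hx ▸ hr⟩

lemma eq_of_largerLeft_eq_singleton {x : Fin n} (hL : largerLeft w q = {p}) (hxq : x < q)
    (hqx : w q < w x) : x = p := by
  simpa [hL] using mem_largerLeft.2 ⟨hxq, hqx⟩

lemma eq_of_smallerRight_eq_singleton {z : Fin n} (hR : smallerRight w q = {r}) (hqz : q < z)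
    (hzq : w z < w q) : z = r := by
  simpa [hR] using mem_smallerRight.2 ⟨hqz, hzq⟩

lemma middle_eq_of_occ321_eq_singleton {x y z : Fin n} (h : occ321 w = {(p, q, r)})
    (hxy : x < y) (hyz : y < z) (h₁ : w z < w y) (h₂ : w y < w x) : y = q := by
  have : (x, y, z) ∈ occ321 w := ⟨hxy, hyz, h₁, h₂⟩
  simp_all

lemma apply_middle_eq_self (h : occ321 w = {(p, q, r)}) : w q = q := by
  obtain ⟨hL, hR⟩ := largerLeft_smallerRight_of_occ321_eq_singleton h
  rw [← card_largerLeft_eq_card_smallerRight_iff, hL, hR, Finset.card_singleton,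
    Finset.card_singleton]

lemma mul_swap_apply_of_ne {s : Fin n} (hq : s ≠ q) (hr : s ≠ r) : (w * swap q r) s = w s := by
  rw [Perm.mul_apply, Equiv.swap_apply_of_ne_of_ne hq hr]

lemma mul_swap_apply_left : (w * swap q r) q = w r := by
  rw [Perm.mul_apply, Equiv.swap_apply_left]

lemma mul_swap_apply_right : (w * swap q r) r = w q := by
  rw [Perm.mul_apply, Equiv.swap_apply_right]

lemma last_ne_of_mem_occ321_mul_swap {x y z : Fin n} (h : occ321 w = {(p, q, r)})
    (hocc : (x, y, z) ∈ occ321 (w * swap q r)) : z ≠ r := by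
  obtain ⟨hL, hR⟩ := largerLeft_smallerRight_of_occ321_eq_singleton h
  obtain ⟨hqr, hrq⟩ : q < r ∧ w r < w q := mem_smallerRight.1 (by simp [hR])
  obtain ⟨hxy : x < y, hyz : y < z, h₁ : (w * swap q r) z < (w * swap q r) y,
    h₂ : (w * swap q r) y < (w * swap q r) x⟩ := hocc
  rintro rfl
  rw [mul_swap_apply_right] at h₁
  rcases lt_trichotomy y q with hyq | rfl | hqy
  · have hxq := hxy.trans hyq
    rw [mul_swap_apply_of_ne hyq.ne hyz.ne] at h₁ h₂
    rw [mul_swap_apply_of_ne hxq.ne (hxy.trans hyz).ne] at h₂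
    have hx := eq_of_largerLeft_eq_singleton hL hxq (h₁.trans h₂)
    exact hxy.ne (hx.trans (eq_of_largerLeft_eq_singleton hL hyq h₁).symm)
  · rw [mul_swap_apply_left] at h₁
    exact h₁.not_gt hrq
  · rw [mul_swap_apply_of_ne hqy.ne' hyz.ne] at h₁ h₂
    have hxq : x ≠ q := by
      rintro rfl
      rw [mul_swap_apply_left] at h₂
      exact (h₁.trans h₂).not_gt hrq
    rw [mul_swap_apply_of_ne hxq (hxy.trans hyz).ne] at h₂
    exact hqy.ne' (middle_eq_of_occ321_eq_singleton h hxy hyz (hrq.trans h₁) h₂)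

lemma occ321_mul_swap_eq_empty (h : occ321 w = {(p, q, r)}) : occ321 (w * swap q r) = ∅ := by
  rw [Set.eq_empty_iff_forall_notMem]
  rintro ⟨x, y, z⟩ hocc
  have hzr := last_ne_of_mem_occ321_mul_swap h hocc
  obtain ⟨hxy : x < y, hyz : y < z, h₁ : (w * swap q r) z < (w * swap q r) y,
    h₂ : (w * swap q r) y < (w * swap q r) x⟩ := hocc
  have hR := (largerLeft_smallerRight_of_occ321_eq_singleton h).2
  obtain ⟨hqr, hrq⟩ : q < r ∧ w r < w q := mem_smallerRight.1 (by simp [hR])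
  have hzq : z ≠ q := by
    rintro rfl
    have hyr := hyz.trans hqr
    rw [mul_swap_apply_left, mul_swap_apply_of_ne hyz.ne hyr.ne] at h₁
    rw [mul_swap_apply_of_ne hyz.ne hyr.ne,
      mul_swap_apply_of_ne (hxy.trans hyz).ne (hxy.trans hyr).ne] at h₂
    exact hyz.ne (middle_eq_of_occ321_eq_singleton h hxy hyr h₁ h₂)
  rw [mul_swap_apply_of_ne hzq hzr] at h₁
  have hyq : y ≠ q := by
    rintro rfl
    rw [mul_swap_apply_left] at h₁
    exact hzr (eq_of_smallerRight_eq_singleton hR hyz (h₁.trans hrq))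
  have hyr : y ≠ r := by
    rintro rfl
    rw [mul_swap_apply_right] at h₁
    exact hzr (eq_of_smallerRight_eq_singleton hR (hqr.trans hyz) h₁)
  rw [mul_swap_apply_of_ne hyq hyr] at h₁ h₂
  have hxq : x ≠ q := by
    rintro rfl
    rw [mul_swap_apply_left] at h₂
    exact hyr (eq_of_smallerRight_eq_singleton hR hxy (h₂.trans hrq))
  have hxr : x ≠ r := by
    rintro rfl
    rw [mul_swap_apply_right] at h₂
    exact hyr (eq_of_smallerRight_eq_singleton hR (hqr.trans hxy) h₂)
  rw [mul_swap_apply_of_ne hxq hxr] at h₂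
  exact hyq (middle_eq_of_occ321_eq_singleton h hxy hyz h₁ h₂)

lemma middle_eq_of_occ321_mul_swap_eq_empty (hL : largerLeft w q = {p})
    (hR : smallerRight w q = {r}) (h : occ321 (w * swap q r) = ∅) {x y z : Fin n}
    (hocc : (x, y, z) ∈ occ321 w) : y = q := by
  obtain ⟨hqr, hrq⟩ : q < r ∧ w r < w q := mem_smallerRight.1 (by simp [hR])
  have hv {s : Fin n} : s ≠ q → s ≠ r → (w * swap q r) s = w s := mul_swap_apply_of_ne
  obtain ⟨hxy : x < y, hyz : y < z, h₁ : w z < w y, h₂ : w y < w x⟩ := hocc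
  have hxz := hxy.trans hyz
  by_contra hyq
  rcases eq_or_ne z r with rfl | hzr
  · rcases lt_or_gt_of_ne hyq with hyq | hqy
    · have := lt_of_occ321_eq_empty h hxy hyq
      rw [mul_swap_apply_left, hv hyq.ne hyz.ne, hv (hxy.trans hyq).ne hxz.ne] at this
      exact (this h₁).not_gt h₂
    · have hwy : w q < w y := by
        by_contra! hle
        have hlt : w y < w q := hle.lt_of_ne (w.injective.ne hqy.ne')
        exact hyz.ne (eq_of_smallerRight_eq_singleton hR hqy hlt)
      have := lt_of_occ321_eq_empty h hxy hyz
      rw [mul_swap_apply_right, hv hqy.ne' hyz.ne,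
        hv (fun hxq ↦ (hxq ▸ h₂).not_gt hwy) hxz.ne] at this
      exact (this hwy).not_gt h₂
  · have hzq : z ≠ q := by
      rintro rfl
      have hx := eq_of_largerLeft_eq_singleton hL hxz (h₁.trans h₂)
      exact hxy.ne (hx.trans (eq_of_largerLeft_eq_singleton hL hyz h₁).symm)
    have hyr : y ≠ r := by
      rintro rfl
      exact hzr (eq_of_smallerRight_eq_singleton hR (hqr.trans hyz) (h₁.trans hrq))
    have hxq : x ≠ q := by
      rintro rfl
      exact hyr (eq_of_smallerRight_eq_singleton hR hxy h₂)
    have hxr : x ≠ r := by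
      rintro rfl
      exact hyr (eq_of_smallerRight_eq_singleton hR (hqr.trans hxy) (h₂.trans hrq))
    have := lt_of_occ321_eq_empty h hxy hyz
    rw [hv hzq hzr, hv hyq hyr, hv hxq hxr] at this
    exact (this h₁).not_gt h₂

lemma occ321_eq_singleton_iff :
    occ321 w = {(p, q, r)} ↔
      largerLeft w q = {p} ∧ smallerRight w q = {r} ∧ occ321 (w * swap q r) = ∅ := by
  constructor
  · intro h
    obtain ⟨hL, hR⟩ := largerLeft_smallerRight_of_occ321_eq_singleton h
    exact ⟨hL, hR, occ321_mul_swap_eq_empty h⟩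
  · rintro ⟨hL, hR, h⟩
    ext ⟨x, y, z⟩
    have hmem : (x, q, z) ∈ occ321 w ↔ x = p ∧ z = r := by
      rw [mem_occ321_iff, hL, hR, Finset.mem_singleton, Finset.mem_singleton]
    constructor
    · intro hocc
      obtain rfl := middle_eq_of_occ321_mul_swap_eq_empty hL hR h hocc
      simpa using hmem.1 hocc
    · rintro ⟨⟩
      exact hmem.2 ⟨rfl, rfl⟩

end Pattern321

section UpDown

variable {n : ℕ} {w : Perm (Fin n)}

lemma upDown_iff : UpDown w ↔ ∀ i j : Fin n, (j : ℕ) = i + 1 →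
    ((i : ℕ) % 2 = 0 → w i < w j) ∧ ((i : ℕ) % 2 = 1 → w j < w i) := by
  constructor
  · rintro h i ⟨j, hj⟩ rfl
    have := h i hj
    split_ifs at this with hi
    · exact ⟨fun _ ↦ this, fun hi' ↦ by lia⟩
    · exact ⟨fun hi' ↦ absurd hi' hi, fun _ ↦ this⟩
  · intro h i hi
    split_ifs with hi'
    · exact (h ⟨i, by lia⟩ ⟨i + 1, hi⟩ rfl).1 hi'
    · exact (h ⟨i, by lia⟩ ⟨i + 1, hi⟩ rfl).2 (by simpa using hi')

lemma UpDown.lt_of_even (hw : UpDown w) {i j : Fin n} (hij : (j : ℕ) = i + 1)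
    (hi : (i : ℕ) % 2 = 0) : w i < w j :=
  (upDown_iff.1 hw i j hij).1 hi

lemma UpDown.lt_of_odd (hw : UpDown w) {i j : Fin n} (hij : (j : ℕ) = i + 1)
    (hi : (i : ℕ) % 2 = 1) : w j < w i :=
  (upDown_iff.1 hw i j hij).2 hi

lemma UpDown.apply_lt_apply_of_even (hw : UpDown w) (h : occ321 w = ∅) {i j : Fin n}
    (hi : (i : ℕ) % 2 = 0) (hi₀ : 0 < (i : ℕ)) (hij : i < j) : w i < w j := by
  let i' : Fin n := ⟨i - 1, by lia⟩
  have hi' : w i < w i' := hw.lt_of_odd (by simp only [i']; lia) (by simp only [i']; lia)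
  by_contra! hle
  have hlt : w j < w i := hle.lt_of_ne (w.injective.ne hij.ne')
  exact (lt_of_occ321_eq_empty h (Fin.lt_def.2 (by simp only [i']; lia)) hij hlt).not_gt hi'

lemma UpDown.apply_lt_apply_of_odd (hw : UpDown w) (h : occ321 w = ∅) {i j : Fin n}
    (hj : (j : ℕ) % 2 = 1) (hjn : (j : ℕ) + 1 < n) (hij : i < j) : w i < w j :=
  lt_of_occ321_eq_empty h (z := ⟨j + 1, hjn⟩) hij (Fin.lt_def.2 (by simp))
    (hw.lt_of_odd rfl hj)

variable {p q r : Fin n}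

lemma UpDown.last_eq_middle_add_two (hw : UpDown w) (h : occ321 w = {(p, q, r)})
    (hq : (q : ℕ) % 2 = 0) : (r : ℕ) = q + 2 := by
  -- A larger even `r` gives the occurrence `(r - 3, r - 2, r)`, whose middle position is not `q`;
  -- an odd `r` gives the second smaller letter `w (r - 1)` to the right of `q`.
  have hR := (largerLeft_smallerRight_of_occ321_eq_singleton h).2
  obtain ⟨hqr, hrq⟩ : q < r ∧ w r < w q := mem_smallerRight.1 (by simp [hR])
  rcases Nat.mod_two_eq_zero_or_one r with hr | hr
  · by_contra hne
    let x : Fin n := ⟨r - 3, by lia⟩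
    let y : Fin n := ⟨r - 2, by lia⟩
    have hxy : x < y := Fin.lt_def.2 (by simp only [x, y]; lia)
    have hyr : y < r := Fin.lt_def.2 (by simp only [y]; lia)
    have hqy : q < y := Fin.lt_def.2 (by simp only [y]; lia)
    have hwyx : w y < w x := hw.lt_of_odd (by simp only [x, y]; lia) (by simp only [x]; lia)
    have hwqy : w q ≤ w y :=
      not_lt.1 fun hlt ↦ hyr.ne (eq_of_smallerRight_eq_singleton hR hqy hlt)
    exact hqy.ne' (middle_eq_of_occ321_eq_singleton h hxy hyr (hrq.trans_le hwqy) hwyx)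
  · let y : Fin n := ⟨r - 1, by lia⟩
    have hyr : y < r := Fin.lt_def.2 (by simp only [y]; lia)
    have hwyr : w y < w r := hw.lt_of_even (by simp only [y]; lia) (by simp only [y]; lia)
    have hqy : q ≠ y := by
      intro hqy
      rw [hqy] at hrq
      exact hwyr.not_gt hrq
    have hlt : q < y := (Fin.le_def.2 (by simp only [y]; lia)).lt_of_ne hqy
    exact absurd (eq_of_smallerRight_eq_singleton hR hlt (hwyr.trans hrq)) hyr.ne

lemma UpDown.mul_swap (hw : UpDown w) (hq : (q : ℕ) % 2 = 0) (hr : (r : ℕ) = q + 2)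
    (hpred : ∀ i : Fin n, (q : ℕ) = i + 1 → w r < w i)
    (hsucc : ∀ j : Fin n, (j : ℕ) = r + 1 → w q < w j) : UpDown (w * swap q r) := by
  rw [upDown_iff]
  intro i j hij
  have hij' := upDown_iff.1 hw i j hij
  rcases eq_or_ne i q with rfl | hiq
  · have hjr : w r < w j := hw.lt_of_odd (by lia) (by lia)
    rw [mul_swap_apply_left, mul_swap_apply_of_ne (by lia) (by lia)]
    exact ⟨fun _ ↦ hjr, by lia⟩
  rcases eq_or_ne i r with rfl | hir
  · rw [mul_swap_apply_right, mul_swap_apply_of_ne (by lia) (by lia)]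
    exact ⟨fun _ ↦ hsucc j hij, by lia⟩
  rw [mul_swap_apply_of_ne hiq hir]
  rcases eq_or_ne j q with rfl | hjq
  · rw [mul_swap_apply_left]
    exact ⟨by lia, fun _ ↦ hpred i hij⟩
  rcases eq_or_ne j r with rfl | hjr
  · have hqi : w q < w i := hw.lt_of_even (by lia) hq
    rw [mul_swap_apply_right]
    exact ⟨by lia, fun _ ↦ hqi⟩
  rwa [mul_swap_apply_of_ne hjq hjr]

lemma UpDown.mul_swap_of_occ321_eq_singleton (hw : UpDown w) (h : occ321 w = {(p, q, r)})
    (hq : (q : ℕ) % 2 = 0) : UpDown (w * swap q r) := by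
  have hR := (largerLeft_smallerRight_of_occ321_eq_singleton h).2
  obtain ⟨hqr, hrq⟩ : q < r ∧ w r < w q := mem_smallerRight.1 (by simp [hR])
  refine hw.mul_swap hq (hw.last_eq_middle_add_two h hq)
    (fun i hi ↦ hrq.trans (hw.lt_of_odd hi (by lia))) fun j hj ↦ ?_
  have hqj : q < j := by lia
  by_contra! hle
  have hlt : w j < w q := hle.lt_of_ne (w.injective.ne hqj.ne')
  have := eq_of_smallerRight_eq_singleton hR hqj hlt
  lia

lemma UpDown.exists_occ321_mul_swap_eq_singleton (hw : UpDown w) (h : occ321 w = ∅)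
    (hq : (q : ℕ) % 2 = 0) (hq₀ : 0 < (q : ℕ)) (hr : (r : ℕ) = q + 2) (hwr : w r = q) :
    ∃ p, occ321 (w * swap q r) = {(p, q, r)} := by
  have hqr : q < r := by lia
  have hR : smallerRight (w * swap q r) q = {r} := by
    ext z
    rw [mem_smallerRight, mul_swap_apply_left, Finset.mem_singleton]
    constructor
    · rintro ⟨hqz, hz⟩
      by_contra hzr
      rw [mul_swap_apply_of_ne hqz.ne' hzr] at hz
      have hrz : w r < w z := by
        rcases lt_or_gt_of_ne hzr with hlt | hgt
        · exact hw.lt_of_odd (by lia) (by lia)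
        · exact hw.apply_lt_apply_of_even h (by lia) (by lia) hgt
      exact hrz.not_gt hz
    · rintro rfl
      rw [mul_swap_apply_right]
      exact ⟨hqr, hw.apply_lt_apply_of_even h hq hq₀ hqr⟩
  have hL : (largerLeft (w * swap q r) q).card = 1 := by
    rw [card_largerLeft_eq_card_smallerRight_iff.2 (mul_swap_apply_left.trans hwr), hR,
      Finset.card_singleton]
  obtain ⟨p, hp⟩ := Finset.card_eq_one.1 hL
  exact ⟨p, occ321_eq_singleton_iff.2 ⟨hp, hR, by rwa [Equiv.mul_swap_mul_self]⟩⟩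

lemma UpDown.mul_swap_of_occ321_eq_empty (hw : UpDown w) (h : occ321 w = ∅)
    (hq : (q : ℕ) % 2 = 0) (hq₀ : 0 < (q : ℕ)) (hr : (r : ℕ) = q + 2) (hwr : w r = q) :
    UpDown (w * swap q r) := by
  obtain ⟨p, hp⟩ := hw.exists_occ321_mul_swap_eq_singleton h hq hq₀ hr hwr
  obtain ⟨hpq, -, -, hlt⟩ : (p, q, r) ∈ occ321 (w * swap q r) := by simp [hp]
  dsimp only at hpq hlt
  rw [mul_swap_apply_left, mul_swap_apply_of_ne hpq.ne (by lia)] at hlt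
  refine hw.mul_swap hq hr (fun i hi ↦ ?_) fun j hj ↦ ?_
  · rcases eq_or_ne p i with rfl | hpi
    · exact hlt
    · exact hlt.trans (hw.apply_lt_apply_of_odd h (by lia) (by lia) (by lia))
  · exact hw.apply_lt_apply_of_even h hq hq₀ (by lia)

lemma ncard_upDown_occ321_eq_singleton (hq : (q : ℕ) % 2 = 0) (hq₀ : 0 < (q : ℕ))
    (hr : (r : ℕ) = q + 2) :
    {w : Perm (Fin n) | UpDown w ∧ ∃ p r, occ321 w = {(p, q, r)}}.ncard =
      {w : Perm (Fin n) | UpDown w ∧ occ321 w = ∅ ∧ w r = q}.ncard := by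
  have himage : (· * swap q r) '' {w : Perm (Fin n) | UpDown w ∧ occ321 w = ∅ ∧ w r = q} =
      {w : Perm (Fin n) | UpDown w ∧ ∃ p r, occ321 w = {(p, q, r)}} := by
    ext w
    constructor
    · rintro ⟨v, ⟨hv, h, hvr⟩, rfl⟩
      obtain ⟨p, hp⟩ := hv.exists_occ321_mul_swap_eq_singleton h hq hq₀ hr hvr
      exact ⟨hv.mul_swap_of_occ321_eq_empty h hq hq₀ hr hvr, p, r, hp⟩
    · rintro ⟨hw, p, r', h⟩
      obtain rfl : r' = r := Fin.ext ((hw.last_eq_middle_add_two h hq).trans hr.symm)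
      refine ⟨w * swap q r', ⟨hw.mul_swap_of_occ321_eq_singleton h hq,
        occ321_mul_swap_eq_empty h, mul_swap_apply_right.trans (apply_middle_eq_self h)⟩, ?_⟩
      exact Equiv.mul_swap_mul_self q r' w
  rw [← himage, Set.ncard_image_of_injective _ (mul_left_injective _)]

end UpDown

section Zigzag

variable {m : ℕ} {w : Perm (Fin (2 * m))}

/-- The identification of the skew shape with the positions of an alternating permutation of
length `2 * m` for which standard fillings correspond to permutations avoiding 321: the row `.U`
reads the positions `2, 4, …, 2 * m - 2, 2 * m - 1` and the row `.D` reads the positions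
`0, 1, 3, …, 2 * m - 3`, where truncated subtraction sends the cell `(.D, 0)` to `0`. -/
def zigzag : DyckStep × Fin m ≃ Fin (2 * m) where
  toFun
    | (.U, i) => ⟨min (2 * i + 2) (2 * m - 1), by lia⟩
    | (.D, i) => ⟨2 * i - 1, by lia⟩
  invFun v :=
    if h : (v : ℕ) = 0 ∨ (v : ℕ) % 2 = 1 ∧ (v : ℕ) + 1 ≠ 2 * m then (.D, ⟨(v + 1) / 2, by lia⟩)
    else (.U, ⟨(v - 1) / 2, by lia⟩)
  left_inv := by rintro ⟨_ | _, i⟩ <;> grind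
  right_inv v := by grind

lemma val_zigzag_U (i : Fin m) :
    (zigzag (.U, i) : Fin (2 * m)) = min (2 * (i : ℕ) + 2) (2 * m - 1) :=
  rfl

lemma val_zigzag_D (i : Fin m) : (zigzag (.D, i) : Fin (2 * m)) = 2 * (i : ℕ) - 1 :=
  rfl

lemma rowStrict_zigzag : RowStrict (zigzag (m := m)) := by
  rintro (_ | _) i j hij <;> refine Fin.lt_def.2 ?_
  · rw [val_zigzag_U, val_zigzag_U]
    lia
  · rw [val_zigzag_D, val_zigzag_D]
    lia

lemma UpDown.isStandard_zigzag_trans (hw : UpDown w) (h : occ321 w = ∅) :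
    IsStandard_s13 (zigzag.trans w) where
  rows := by
    rintro (_ | _) i j hij
    · have hi := val_zigzag_U i
      exact hw.apply_lt_apply_of_even h (by lia) (by lia) (rowStrict_zigzag _ hij)
    · have hj := val_zigzag_D j
      exact hw.apply_lt_apply_of_odd h (by lia) (by lia) (rowStrict_zigzag _ hij)
  cols i j hij := by
    have hi := val_zigzag_U i
    have hj := val_zigzag_D j
    exact hw.lt_of_odd (by lia) (by lia)

lemma IsStandard_s13.apply_lt_apply (h : IsStandard_s13 (zigzag.trans w)) {x y : Fin (2 * m)}
    (hxy : x < y) (hrow : (zigzag.symm x).1 = (zigzag.symm y).1) : w x < w y := by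
  obtain ⟨⟨s, i⟩, rfl⟩ := zigzag.surjective x
  obtain ⟨⟨t, j⟩, rfl⟩ := zigzag.surjective y
  obtain rfl : s = t := by simpa using hrow
  exact h.rows s ((rowStrict_zigzag s).lt_iff_lt.1 hxy)

lemma IsStandard_s13.occ321_eq_empty (h : IsStandard_s13 (zigzag.trans w)) : occ321 w = ∅ := by
  rw [Set.eq_empty_iff_forall_notMem]
  rintro ⟨x, y, z⟩ ⟨hxy, hyz, h₁, h₂⟩
  have hpigeonhole : (zigzag.symm x).1 = (zigzag.symm y).1 ∨
      (zigzag.symm y).1 = (zigzag.symm z).1 ∨ (zigzag.symm x).1 = (zigzag.symm z).1 := by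
    generalize (zigzag.symm x).1 = s, (zigzag.symm y).1 = t, (zigzag.symm z).1 = u
    cases s <;> cases t <;> cases u <;> simp
  rcases hpigeonhole with hrow | hrow | hrow
  · exact (h.apply_lt_apply hxy hrow).not_gt h₂
  · exact (h.apply_lt_apply hyz hrow).not_gt h₁
  · exact (h.apply_lt_apply (hxy.trans hyz) hrow).not_gt (h₁.trans h₂)

lemma IsStandard_s13.lt_of_odd (h : IsStandard_s13 (zigzag.trans w)) {i j : Fin (2 * m)}
    (hij : (j : ℕ) = i + 1) (hi : (i : ℕ) % 2 = 1) : w j < w i := by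
  let k : Fin m := ⟨i / 2, by lia⟩
  let l : Fin m := ⟨i / 2 + 1, by lia⟩
  have hil : i = zigzag (.D, l) := Fin.ext (by simp only [val_zigzag_D, l]; lia)
  have hjk : j = zigzag (.U, k) := Fin.ext (by simp only [val_zigzag_U, k]; lia)
  rw [hil, hjk]
  exact h.cols k l rfl

lemma IsStandard_s13.lt_of_even (hm : 2 ≤ m) (h : IsStandard_s13 (zigzag.trans w)) {i j : Fin (2 * m)}
    (hij : (j : ℕ) = i + 1) (hi : (i : ℕ) % 2 = 0) : w i < w j := by
  rcases Nat.eq_zero_or_pos i with hi₀ | hi₀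
  · have hiD : i = zigzag (.D, ⟨0, by lia⟩) := Fin.ext hi₀
    have hjD : j = zigzag (.D, ⟨1, hm⟩) := Fin.ext (by simp only [val_zigzag_D]; lia)
    rw [hiD, hjD]
    exact h.rows .D (Fin.lt_def.2 zero_lt_one)
  rcases eq_or_ne ((j : ℕ) + 1) (2 * m) with hjm | hjm
  · let k : Fin m := ⟨m - 2, by lia⟩
    let l : Fin m := ⟨m - 1, by lia⟩
    have hik : i = zigzag (.U, k) := Fin.ext (by simp only [val_zigzag_U, k]; lia)
    have hjl : j = zigzag (.U, l) := Fin.ext (by simp only [val_zigzag_U, l]; lia)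
    rw [hik, hjl]
    exact h.rows .U (Fin.lt_def.2 (by simp only [k, l]; lia))
  · let i' : Fin (2 * m) := ⟨i - 1, by lia⟩
    let k : Fin m := ⟨i / 2, by lia⟩
    let l : Fin m := ⟨i / 2 + 1, by lia⟩
    have hik : i' = zigzag (.D, k) := Fin.ext (by simp only [val_zigzag_D, i', k]; lia)
    have hjl : j = zigzag (.D, l) := Fin.ext (by simp only [val_zigzag_D, l]; lia)
    have hlt : w i' < w j := by
      rw [hik, hjl]
      exact h.rows .D (Fin.lt_def.2 (by simp only [k, l]; lia))
    exact (h.lt_of_odd (by simp only [i']; lia) (by simp only [i']; lia)).trans hlt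

lemma upDown_and_occ321_eq_empty_iff (hm : 2 ≤ m) :
    UpDown w ∧ occ321 w = ∅ ↔ IsStandard_s13 (zigzag.trans w) :=
  ⟨fun h ↦ h.1.isStandard_zigzag_trans h.2, fun h ↦ ⟨upDown_iff.2 fun _ _ hij ↦
    ⟨h.lt_of_even hm hij, h.lt_of_odd hij⟩, h.occ321_eq_empty⟩⟩

lemma ncard_upDown_occ321_eq_empty_eq_ncard_markedBallotWords {j : ℕ} {q r : Fin (2 * m)}
    (hq : (q : ℕ) = 2 * j) (hr : (r : ℕ) = q + 2) :
    {w | UpDown w ∧ occ321 w = ∅ ∧ w r = q}.ncard = (markedBallotWords m j).ncard := by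
  have hj : j < m := by lia
  have hrj : zigzag (.U, ⟨j, hj⟩) = r := Fin.ext (by simp only [val_zigzag_U]; lia)
  rw [← ncard_isStandard_eq_ncard_markedBallotWords hj]
  refine Set.ncard_congr (fun w _ ↦ zigzag.trans w) ?_ ?_ ?_
  · rintro w ⟨hw, h, hwr⟩
    refine ⟨hw.isStandard_zigzag_trans h, ?_⟩
    rw [Equiv.trans_apply, hrj, hwr, hq]
  · intro v w _ _ hvw
    exact Equiv.ext fun x ↦ by simpa using Equiv.congr_fun hvw (zigzag.symm x)
  · rintro σ ⟨hσ, hσj⟩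
    have htrans : zigzag.trans (zigzag.symm.trans σ) = σ := by
      rw [← Equiv.trans_assoc, Equiv.self_trans_symm, Equiv.refl_trans]
    obtain ⟨hw, h⟩ := (upDown_and_occ321_eq_empty_iff (by lia)).2 (htrans.symm ▸ hσ)
    refine ⟨zigzag.symm.trans σ, ⟨hw, h, Fin.ext ?_⟩, htrans⟩
    rw [← hrj, Equiv.trans_apply, Equiv.symm_apply_apply, hσj, hq]

end Zigzag

section ReverseComplement

variable {n : ℕ} {w : Perm (Fin n)}

/-- The reverse-complement symmetry of permutations: `w` is sent to `i ↦ rev (w (rev i))`. -/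
def reverseComplement (w : Perm (Fin n)) : Perm (Fin n) := Fin.revPerm.permCongr w

lemma reverseComplement_apply (i : Fin n) : reverseComplement w i = (w i.rev).rev := rfl

lemma reverseComplement_involutive :
    Function.Involutive (reverseComplement : Perm (Fin n) → Perm (Fin n)) := by
  intro w
  ext i
  simp only [reverseComplement_apply, Fin.rev_rev]

lemma UpDown.reverseComplement (hn : Even n) (hw : UpDown w) : UpDown (reverseComplement w) := by
  refine upDown_iff.2 fun i j hij ↦ ?_
  have hn₂ : n % 2 = 0 := Nat.even_iff.1 hn
  have hi := Fin.val_rev i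
  have hj := Fin.val_rev j
  simp only [reverseComplement_apply, Fin.rev_lt_rev]
  exact ⟨fun h ↦ hw.lt_of_even (by lia) (by lia), fun h ↦ hw.lt_of_odd (by lia) (by lia)⟩

lemma occ321_reverseComplement_eq_singleton {p q r : Fin n} (h : occ321 w = {(p, q, r)}) :
    occ321 (reverseComplement w) = {(r.rev, q.rev, p.rev)} := by
  ext ⟨x, y, z⟩
  have hmem : (x, y, z) ∈ occ321 (reverseComplement w) ↔ (z.rev, y.rev, x.rev) ∈ occ321 w := by
    simp only [occ321, Set.mem_ofPred_eq, reverseComplement_apply, Fin.rev_lt_rev]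
    tauto
  rw [hmem, h]
  simp only [Set.mem_singleton_iff, Prod.mk.injEq, Fin.rev_eq_iff]
  tauto

/-- The alternating permutations with a unique occurrence of 321 whose middle position has
remainder `a` modulo 2. -/
def upDownSingle321 (n a : ℕ) : Set (Perm (Fin n)) :=
  {w | UpDown w ∧ ∃ p q r : Fin n, (q : ℕ) % 2 = a ∧ occ321 w = {(p, q, r)}}

lemma mapsTo_reverseComplement (hn : Even n) (a : ℕ) :
    Set.MapsTo reverseComplement (upDownSingle321 n a) (upDownSingle321 n (1 - a)) := by
  rintro w ⟨hw, p, q, r, hq, h⟩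
  refine ⟨hw.reverseComplement hn, _, _, _, ?_, occ321_reverseComplement_eq_singleton h⟩
  have hn₂ : n % 2 = 0 := Nat.even_iff.1 hn
  rw [Fin.val_rev]
  lia

lemma ncard_upDownSingle321_one (hn : Even n) :
    (upDownSingle321 n 1).ncard = (upDownSingle321 n 0).ncard :=
  have hinv (s : Set (Perm (Fin n))) : Set.LeftInvOn reverseComplement reverseComplement s :=
    fun w _ ↦ reverseComplement_involutive w
  Set.BijOn.ncard_eq <| Set.InvOn.bijOn ⟨hinv _, hinv _⟩ (mapsTo_reverseComplement hn 1)
    (mapsTo_reverseComplement hn 0)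

lemma ncard_upDown_ncard_occ321_eq_one (hn : Even n) :
    {w : Perm (Fin n) | UpDown w ∧ (occ321 w).ncard = 1}.ncard =
      2 * (upDownSingle321 n 0).ncard := by
  have hunion : {w : Perm (Fin n) | UpDown w ∧ (occ321 w).ncard = 1} =
      upDownSingle321 n 0 ∪ upDownSingle321 n 1 := by
    ext w
    simp only [Set.mem_ofPred_eq, Set.ncard_eq_one, Prod.exists, Set.mem_union, upDownSingle321]
    constructor
    · rintro ⟨hw, p, q, r, h⟩
      exact (Nat.mod_two_eq_zero_or_one q).imp (fun hq ↦ ⟨hw, p, q, r, hq, h⟩)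
        (fun hq ↦ ⟨hw, p, q, r, hq, h⟩)
    · rintro (⟨hw, p, q, r, -, h⟩ | ⟨hw, p, q, r, -, h⟩) <;> exact ⟨hw, p, q, r, h⟩
  have hdisj : Disjoint (upDownSingle321 n 0) (upDownSingle321 n 1) := by
    refine Set.disjoint_left.2 ?_
    rintro w ⟨-, p, q, r, hq, h⟩ ⟨-, p', q', r', hq', h'⟩
    obtain ⟨-, rfl, -⟩ : p = p' ∧ q = q' ∧ r = r' := by simpa [h] using h'
    lia
  rw [hunion, Set.ncard_union_eq hdisj, ncard_upDownSingle321_one hn, two_mul]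

end ReverseComplement

lemma ncard_upDownSingle321_zero (n : ℕ) :
    (upDownSingle321 (2 * (n + 2)) 0).ncard =
      ∑ i ∈ Finset.range n, (markedBallotWords (n + 2) (i + 1)).ncard := by
  let q (i : Fin n) : Fin (2 * (n + 2)) := ⟨2 * (i + 1), by lia⟩
  let r (i : Fin n) : Fin (2 * (n + 2)) := ⟨2 * (i + 1) + 2, by lia⟩
  have hunion : upDownSingle321 (2 * (n + 2)) 0 =
      ⋃ i, {w | UpDown w ∧ ∃ p r, occ321 w = {(p, q i, r)}} := by
    ext w
    simp only [upDownSingle321, Set.mem_ofPred_eq, Set.mem_iUnion]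
    constructor
    · rintro ⟨hw, p, x, z, hx, h⟩
      have hpx : p < x := (h.superset rfl).1
      have hz := hw.last_eq_middle_add_two h hx
      have hqx : q ⟨x / 2 - 1, by lia⟩ = x := Fin.ext (by simp only [q]; lia)
      exact ⟨_, hw, p, z, hqx ▸ h⟩
    · rintro ⟨i, hw, p, z, h⟩
      exact ⟨hw, p, q i, z, by simp only [q]; lia, h⟩
  have hdisj : Pairwise (Function.onFun Disjoint
      fun i ↦ {w | UpDown w ∧ ∃ p r, occ321 w = {(p, q i, r)}}) := by
    refine fun i j hij ↦ Set.disjoint_left.2 ?_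
    rintro w ⟨-, p, z, h⟩ ⟨-, p', z', h'⟩
    obtain ⟨-, hq, -⟩ : p = p' ∧ q i = q j ∧ z = z' := by simpa [h] using h'
    exact hij (Fin.ext (by simpa [q] using hq))
  rw [hunion, Set.ncard_iUnion_of_finite (fun _ ↦ Set.toFinite _) hdisj,
    finsum_eq_sum_of_fintype, ← Fin.sum_univ_eq_sum_range]
  refine Finset.sum_congr rfl fun i _ ↦ ?_
  rw [ncard_upDown_occ321_eq_singleton (r := r i) (by simp only [q]; lia) (by simp [q]) rfl,
    ncard_upDown_occ321_eq_empty_eq_ncard_markedBallotWords rfl rfl]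

lemma catalan_add_four (n : ℕ) :
    catalan (n + 4) = 2 * catalan (n + 3) + 2 * catalan (n + 2) +
      ∑ i ∈ Finset.range n, catalan (i + 2) * catalan (n + 1 - i) := by
  have hsub (i : ℕ) : n + 3 - (i + 1 + 1) = n + 1 - i := by lia
  rw [catalan_succ, Fin.sum_univ_eq_sum_range (fun i ↦ catalan i * catalan (n + 3 - i)),
    Finset.sum_range_succ, Finset.sum_range_succ, Finset.sum_range_succ', Finset.sum_range_succ']
  simp only [hsub, Nat.sub_self, Nat.sub_zero, zero_add, catalan_zero, catalan_one, mul_one,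
    one_mul, show n + 1 - n = 1 by lia, show n + 3 - 1 = n + 2 by lia]
  ring

lemma sum_ncard_markedBallotWords (n : ℕ) :
    (∑ i ∈ Finset.range n, (markedBallotWords (n + 2) (i + 1)).ncard) + 3 * catalan (n + 4) =
      catalan (n + 5) := by
  have hsum : (∑ i ∈ Finset.range n, (markedBallotWords (n + 2) (i + 1)).ncard) +
      ∑ i ∈ Finset.range n, catalan (i + 2) * catalan (n + 1 - i) =
        ∑ i ∈ Finset.range n, catalan (i + 2) * catalan (n + 2 - i) := by
    rw [← Finset.sum_add_distrib]
    refine Finset.sum_congr rfl fun i hi ↦ ?_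
    obtain ⟨k, rfl⟩ := Nat.exists_eq_add_of_lt (Finset.mem_range.1 hi)
    rw [show i + k + 1 + 1 - i = k + 1 + 1 by lia, show i + k + 1 + 2 - i = k + 1 + 2 by lia,
      show i + k + 1 + 2 = i + 1 + (k + 1) + 1 by lia]
    exact ncard_markedBallotWords_add (i + 1) (k + 1)
  have h₄ := catalan_add_four n
  have h₅ := catalan_add_four (n + 1)
  rw [Finset.sum_range_succ, show n + 1 + 1 - n = 2 by lia, catalan_two] at h₅
  lia

lemma add_two_mul_catalan_succ (n : ℕ) :
    (n + 2) * catalan (n + 1) = 2 * (2 * n + 1) * catalan n := by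
  refine Nat.eq_of_mul_eq_mul_left (Nat.add_one_pos n) ?_
  have h := Nat.succ_mul_centralBinom_succ n
  rw [← succ_mul_catalan_eq_centralBinom, ← succ_mul_catalan_eq_centralBinom] at h
  linear_combination h

lemma catalan_mul_factorial_mul_factorial (n : ℕ) :
    catalan n * ((n + 1).factorial * n.factorial) = (2 * n).factorial := by
  have h := Nat.add_choose_mul_factorial_mul_factorial n n
  rw [← two_mul, ← Nat.centralBinom_eq_two_mul_choose, ← succ_mul_catalan_eq_centralBinom] at h
  rw [← h, Nat.factorial_succ]
  ring

lemma mul_factorial_of_add_three_mul_catalan {n s : ℕ}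
    (hs : s + 3 * catalan (n + 4) = catalan (n + 5)) :
    s * ((n + 3).factorial * (n + 6).factorial) = 2 * n * (2 * n + 7).factorial := by
  have hrec : (n + 6) * s = n * catalan (n + 4) := by
    have h := add_two_mul_catalan_succ (n + 4)
    rw [← hs] at h
    lia
  have hfac : catalan (n + 4) * ((n + 5).factorial * (n + 3).factorial) =
      2 * (2 * n + 7).factorial := by
    have h := catalan_mul_factorial_mul_factorial (n + 4)
    rw [Nat.factorial_succ (n + 3), show 2 * (n + 4) = 2 * n + 7 + 1 by lia,
      Nat.factorial_succ (2 * n + 7)] at h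
    refine Nat.eq_of_mul_eq_mul_left (Nat.add_one_pos (n + 3)) ?_
    linear_combination h
  calc s * ((n + 3).factorial * (n + 6).factorial)
      = (n + 6) * s * ((n + 5).factorial * (n + 3).factorial) := by
        rw [Nat.factorial_succ (n + 5)]
        ring
    _ = n * (catalan (n + 4) * ((n + 5).factorial * (n + 3).factorial)) := by
        rw [hrec, mul_assoc]
    _ = 2 * n * (2 * n + 7).factorial := by
        rw [hfac]
        ring

theorem stmt13 (m : ℕ) (hm : 2 ≤ m) :
    Nat.card {w : Equiv.Perm (Fin (2 * m)) // UpDown w ∧ (occ321 w).ncard = 1} *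
        (Nat.factorial (m + 1) * Nat.factorial (m + 4)) =
      4 * (m - 2) * Nat.factorial (2 * m + 3) := by
  obtain ⟨n, rfl⟩ := Nat.exists_eq_add_of_le' hm
  have hcount : Nat.card {w : Equiv.Perm (Fin (2 * (n + 2))) //
      UpDown w ∧ (occ321 w).ncard = 1} =
        2 * ∑ i ∈ Finset.range n, (markedBallotWords (n + 2) (i + 1)).ncard :=
    (ncard_upDown_ncard_occ321_eq_one (even_two_mul _)).trans
      (congrArg (2 * ·) (ncard_upDownSingle321_zero n))
  have hsum := mul_factorial_of_add_three_mul_catalan (sum_ncard_markedBallotWords n)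
  rw [hcount, mul_assoc, Nat.add_sub_cancel]
  linear_combination 2 * hsum
end
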